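/- arXiv:2405.04617 — 2 statements merged into one kernel-verified Lean document; each statement's English description precedes it below -/
import Mathlib

section
/- Let μ and c be positive integers, let G be a finite simple graph, let (T, β) be a tree decomposition of G with μ(T, β) ≤ μ, let x be a node of T, and let S' be an independent set of G with S' ⊆ β(x) such that every vertex v ∈ S' satisfies α(G[N(v)]) < c. Then α(G[N(S')]) < μ · c, where N(S') = (⋃_{v ∈ S'} N[v]) \ S'. -/
/-!
Choose an inclusion-minimal `A ⊆ S'` that still dominates the independent set `I ⊆ N(S')`. By
minimality every `v ∈ A` has a private neighbor in `I`, and since `A` and `I` are independent, the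
edges from `A` to these private neighbors form an induced matching. It touches `β(x)`, so
`|A| ≤ μ`; each `v ∈ A` has at most `c - 1` neighbors in `I`, hence `|I| ≤ μ (c - 1) < μ c`.
-/

open SimpleGraph

/-- A tree decomposition of a (finite, simple) graph `G`: a finite tree `T` together with
bags `bag x ⊆ V` such that every vertex is in a bag, every edge is inside some bag, and for
every vertex the set of nodes whose bag contains it induces a connected subtree of `T`. -/
structure TreeDecomp {V : Type} (G : SimpleGraph V) where
  ι : Type
  fintype_ι : Fintype ι
  T : SimpleGraph ι
  isTree : T.IsTree
  bag : ι → Set V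
  mem_bag : ∀ v : V, ∃ x : ι, v ∈ bag x
  edge_bag : ∀ ⦃u v : V⦄, G.Adj u v → ∃ x : ι, u ∈ bag x ∧ v ∈ bag x
  bag_conn : ∀ v : V, (T.induce {x : ι | v ∈ bag x}).Connected

/-- `a`, `b` enumerate the endpoints of an induced matching of size `n` in `G`:
the edges `a i — b i` are present, and endpoints of distinct edges are pairwise distinct
and non-adjacent. -/
def IsIndMatching {V : Type} (G : SimpleGraph V) {n : ℕ} (a b : Fin n → V) : Prop :=
  (∀ i, G.Adj (a i) (b i)) ∧
  ∀ i j : Fin n, i ≠ j →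
    a i ≠ a j ∧ a i ≠ b j ∧ b i ≠ a j ∧ b i ≠ b j ∧
    ¬ G.Adj (a i) (a j) ∧ ¬ G.Adj (a i) (b j) ∧ ¬ G.Adj (b i) (a j) ∧ ¬ G.Adj (b i) (b j)

/-- `μ(T,β) ≤ μ`: every induced matching touching a bag of the decomposition has size at
most `μ`. -/
def TreeDecomp.MuLE {V : Type} {G : SimpleGraph V} (td : TreeDecomp G) (μ : ℕ) : Prop :=
  ∀ (x : td.ι) (n : ℕ) (a b : Fin n → V),
    IsIndMatching G a b → (∀ i, a i ∈ td.bag x ∨ b i ∈ td.bag x) → n ≤ μ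

/-- `α(T,β) ≤ k`: every independent set contained in a single bag has size at most `k`. -/
def TreeDecomp.AlphaLE {V : Type} {G : SimpleGraph V} (td : TreeDecomp G) (k : ℕ) : Prop :=
  ∀ (x : td.ι) (I : Finset V), ↑I ⊆ td.bag x →
    ((I : Set V)).Pairwise (fun u v => ¬ G.Adj u v) → I.card ≤ k

/-- The induced matching treewidth `tree-μ(G)`: the least `n` admitting a tree decomposition
with `μ(T,β) ≤ n`. -/
noncomputable def treeMu {V : Type} (G : SimpleGraph V) : ℕ :=
  sInf {n | ∃ td : TreeDecomp G, td.MuLE n}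

/-- The tree-independence number `tree-α(G)`: the least `n` admitting a tree decomposition
with `α(T,β) ≤ n`. -/
noncomputable def treeAlpha {V : Type} (G : SimpleGraph V) : ℕ :=
  sInf {n | ∃ td : TreeDecomp G, td.AlphaLE n}

/-- The closed neighbourhood `N[v]`. -/
def closedNbhd {V : Type} (G : SimpleGraph V) (v : V) : Set V := insert v (G.neighborSet v)

/-- The (open) neighbourhood of a set, `N(X) = (⋃ v ∈ X, N[v]) \ X`. -/
def extNbhd {V : Type} (G : SimpleGraph V) (X : Set V) : Set V :=
  (⋃ v ∈ X, closedNbhd G v) \ X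

section

variable {V : Type*} {G : SimpleGraph V}

/-- `A` dominates `W` if every vertex of `W` has a neighbor in `A`. As in total domination, a vertex
does not dominate itself, so that in an inclusion-minimal dominating set every vertex has a private
neighbor. -/
def Dominates (G : SimpleGraph V) (A W : Set V) : Prop :=
  ∀ w ∈ W, ∃ v ∈ A, G.Adj v w

/-- `w` is a private neighbor of `v` with respect to `A`: it is adjacent to `v` and to no other
vertex of `A`. The vertex `v` itself is usually in `A`, but this is not part of the notion. Private
neighbors are the second endpoints of the induced matchings built from minimal dominating sets. -/
def IsPrivateNeighbor (G : SimpleGraph V) (A : Set V) (v w : V) : Prop :=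
  G.Adj v w ∧ ∀ u ∈ A, G.Adj u w → u = v

theorem Dominates.exists_minimal_finset {S W : Set V} (hS : Dominates G S W) (hW : W.Finite) :
    ∃ A : Finset V, ↑A ⊆ S ∧ Minimal (Dominates G · W) (A : Set V) := by
  choose! f hfS hfW using hS
  have hfin : (f '' W).Finite := hW.image f
  have hdom : Dominates G (f '' W) W := fun w hw => ⟨f w, Set.mem_image_of_mem f hw, hfW w hw⟩
  obtain ⟨A, hAf, hA⟩ := (hfin.finite_subsets.inter_of_left {B | Dominates G B W}).exists_le_minimal
    ⟨Set.Subset.refl (f '' W), hdom⟩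
  lift A to Finset V using hfin.subset hAf
  exact ⟨A, hAf.trans (Set.image_subset_iff.2 hfS), hA.prop.2,
    fun B hB hBA => hA.le_of_le ⟨hBA.trans hAf, hB⟩ hBA⟩

theorem Dominates.exists_isPrivateNeighbor_of_minimal {A W : Set V}
    (hA : Minimal (Dominates G · W) A) {v : V} (hv : v ∈ A) :
    ∃ w ∈ W, IsPrivateNeighbor G A v w := by
  by_contra! hnone
  have hdom : Dominates G (A \ {v}) W := by
    intro w hw
    obtain ⟨u, hu, huw⟩ := hA.prop w hw
    obtain rfl | huv := eq_or_ne u v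
    · by_contra! hother
      exact hnone w hw ⟨huw, fun z hz hzw => by_contra fun hzu => hother z ⟨hz, hzu⟩ hzw⟩
    · exact ⟨u, ⟨hu, huv⟩, huw⟩
  exact hA.notMem_of_prop_sdiff_singleton hdom hv

theorem Dominates.card_le_mul {A W : Finset V} {k : ℕ} (hdom : Dominates G A W)
    (hk : ∀ v ∈ A, ∀ J ⊆ W, ↑J ⊆ G.neighborSet v → J.card ≤ k) : W.card ≤ A.card * k := by
  classical
  have hcover : W ⊆ A.biUnion fun v => W.filter (G.Adj v) := by
    intro w hw
    obtain ⟨v, hv, hvw⟩ := hdom w hw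
    exact Finset.mem_biUnion.2 ⟨v, hv, Finset.mem_filter.2 ⟨hw, hvw⟩⟩
  refine (Finset.card_le_card hcover).trans (Finset.card_biUnion_le_card_mul _ _ _ fun v hv => ?_)
  exact hk v hv _ (Finset.filter_subset _ _) fun w hw => (Finset.mem_filter.1 hw).2

end

section

variable {V : Type} {G : SimpleGraph V}

theorem isIndMatching_of_isPrivateNeighbor {A W : Set V} (hA : G.IsIndepSet A)
    (hW : G.IsIndepSet W) {n : ℕ} {a b : Fin n → V} (ha : Function.Injective a)
    (haA : ∀ i, a i ∈ A) (hbW : ∀ i, b i ∈ W) (hab : ∀ i, IsPrivateNeighbor G A (a i) (b i)) :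
    IsIndMatching G a b := by
  refine ⟨fun i => (hab i).1, fun i j hij => ?_⟩
  have hnonadj : ∀ {i j}, i ≠ j → ¬ G.Adj (a i) (b j) := fun hij h =>
    ha.ne hij ((hab _).2 _ (haA _) h)
  have haa : ∀ i j, ¬ G.Adj (a i) (a j) := fun i j h => hA (haA i) (haA j) h.ne h
  have hne : ∀ i j, a i ≠ b j := fun i j h => haa j i (h ▸ (hab j).1)
  have hb : b i ≠ b j := fun h => hnonadj hij (h ▸ (hab i).1)
  exact ⟨ha.ne hij, hne i j, (hne j i).symm, hb,
    haa i j, hnonadj hij, fun h => hnonadj hij.symm h.symm, hW (hbW i) (hbW j) hb⟩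

theorem Dominates.exists_isIndMatching_of_minimal {A : Finset V} {W : Set V}
    (hmin : Minimal (Dominates G · W) (A : Set V)) (hA : G.IsIndepSet A) (hW : G.IsIndepSet W) :
    ∃ a b : Fin A.card → V, IsIndMatching G a b ∧ ∀ i, a i ∈ A := by
  choose! p hpW hp using fun v => Dominates.exists_isPrivateNeighbor_of_minimal (v := v) hmin
  let e := A.equivFin.symm
  have heA : ∀ i, (e i : V) ∈ A := fun i => (e i).2
  exact ⟨fun i => e i, fun i => p (e i),
    isIndMatching_of_isPrivateNeighbor hA hW (Subtype.val_injective.comp e.injective) heA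
      (fun i => hpW _ (heA i)) (fun i => hp _ (heA i)), heA⟩

theorem dominates_extNbhd (X : Set V) : Dominates G X (extNbhd G X) := by
  rintro w ⟨hw, hwX⟩
  obtain ⟨v, hv, rfl | hvw⟩ := Set.mem_iUnion₂.1 hw
  · exact absurd hv hwX
  · exact ⟨v, hv, hvw⟩

theorem stmt7_general {μ c : ℕ} (hμ : 0 < μ) (hc : 0 < c) {S : Set V} (hS : G.IsIndepSet S)
    (hmatching : ∀ (n : ℕ) (a b : Fin n → V), IsIndMatching G a b → (∀ i, a i ∈ S) → n ≤ μ)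
    (hlight : ∀ v ∈ S, ∀ I : Finset V, ↑I ⊆ G.neighborSet v → G.IsIndepSet I → I.card < c)
    (I : Finset V) (hIS : ↑I ⊆ extNbhd G S) (hI : G.IsIndepSet I) : I.card < μ * c := by
  have hdom : Dominates G S I := fun w hw => dominates_extNbhd S w (hIS hw)
  obtain ⟨A, hAS, hA⟩ := hdom.exists_minimal_finset I.finite_toSet
  obtain ⟨a, b, hab, haA⟩ := Dominates.exists_isIndMatching_of_minimal hA (hS.mono hAS) hI
  have hAμ : A.card ≤ μ := hmatching _ a b hab fun i => hAS (haA i)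
  calc
    I.card ≤ A.card * (c - 1) := Dominates.card_le_mul hA.prop fun v hv J hJI hJv =>
      Nat.le_sub_one_of_lt (hlight v (hAS hv) J hJv (hI.mono hJI))
    _ ≤ μ * (c - 1) := Nat.mul_le_mul_right _ hAμ
    _ < μ * c := Nat.mul_lt_mul_of_pos_left (Nat.sub_one_lt_of_lt hc) hμ

end

/-- Let `(T, β)` be a tree decomposition of a finite graph `G` with `μ(T,β) ≤ μ`, let `x`
be a node, and let `S' ⊆ β(x)` be an independent set all of whose vertices `v` satisfy
`α(G[N(v)]) < c`. Then `α(G[N(S')]) < μ · c`. -/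
theorem stmt7 (μ c : ℕ) (hμ : 0 < μ) (hc : 0 < c) (V : Type) [Fintype V]
    (G : SimpleGraph V) (td : TreeDecomp G) (htd : td.MuLE μ) (x : td.ι)
    (S' : Set V) (hS'sub : S' ⊆ td.bag x)
    (hS'ind : S'.Pairwise fun u v => ¬ G.Adj u v)
    (hlight : ∀ v ∈ S', ∀ I : Finset V, ↑I ⊆ G.neighborSet v →
      ((I : Set V)).Pairwise (fun u w => ¬ G.Adj u w) → I.card < c) :
    ∀ I : Finset V, ↑I ⊆ extNbhd G S' →
      ((I : Set V)).Pairwise (fun u w => ¬ G.Adj u w) → I.card < μ * c := by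
  exact stmt7_general hμ hc hS'ind
    (fun n a b hab ha => htd x n a b hab fun i => .inl (hS'sub (ha i))) hlight
end

section
/- Let G be a finite simple graph, let (T, β) be a tree decomposition of G, and let L be an independent set of G. Then G admits a tree decomposition (T', β') in which every bag is either equal to N[s] for some s ∈ L, or equal to (β(x) \ L) ∪ N(β(x) ∩ L) for some node x of T. -/
open SimpleGraph

/-!
Replace, in each bag, every `s ∈ L` by its neighbours, and for each `s ∈ L` hang a new leaf with
bag `N[s]` from some node whose old bag contains `s`. A vertex `v ∉ L` now occupies the union of
its old subtree with the subtrees of its neighbours in `L`; each of these meets the old subtree of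
`v` because the edge to `v` lies in some bag, so the union is a subtree, and it contains the parent
of every new leaf whose bag contains `v`. Since `L` is independent, a vertex `s ∈ L` occurs only in
the bag of its own leaf.
-/

/-- The graph obtained from `T` by attaching to it, for every `b : β`, a new vertex of degree one
with neighbour `p b`. The old vertices are `Sum.inl a` and the new ones `Sum.inr b`. -/
def attachLeaves {α β : Type*} (T : SimpleGraph α) (p : β → α) : SimpleGraph (α ⊕ β) where
  Adj
    | .inl a, .inl a' => T.Adj a a'
    | .inl a, .inr b => a = p b
    | .inr b, .inl a => a = p b
    | .inr _, .inr _ => False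
  symm := ⟨by rintro (a | b) (a' | b') h <;> first | exact h.symm | exact h⟩
  loopless := ⟨by rintro (a | b) h <;> first | exact T.irrefl h | exact h⟩

section attachLeaves

variable {α β : Type*} {T : SimpleGraph α} {p : β → α}

@[simp]
theorem attachLeaves_adj_inl_inl {a a' : α} :
    (attachLeaves T p).Adj (.inl a) (.inl a') ↔ T.Adj a a' := Iff.rfl

@[simp]
theorem attachLeaves_adj_inl_inr {a : α} {b : β} :
    (attachLeaves T p).Adj (.inl a) (.inr b) ↔ a = p b := Iff.rfl

@[simp]
theorem attachLeaves_adj_inr_inl {a : α} {b : β} :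
    (attachLeaves T p).Adj (.inr b) (.inl a) ↔ a = p b := Iff.rfl

@[simp]
theorem not_attachLeaves_adj_inr_inr {b b' : β} :
    ¬ (attachLeaves T p).Adj (.inr b) (.inr b') := id

theorem attachLeaves_induce_connected {S : Set (α ⊕ β)}
    (hconn : (T.induce (Sum.inl ⁻¹' S)).Connected)
    (hparent : ∀ b, .inr b ∈ S → .inl (p b) ∈ S) :
    ((attachLeaves T p).induce S).Connected := by
  let incl : T.induce (Sum.inl ⁻¹' S) →g (attachLeaves T p).induce S :=
    ⟨fun a => ⟨.inl a.1, a.2⟩, id⟩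
  obtain ⟨root⟩ := hconn.nonempty
  rw [connected_iff_exists_forall_reachable]
  refine ⟨incl root, ?_⟩
  rintro ⟨a | b, hmem⟩
  · exact (hconn.preconnected root ⟨a, hmem⟩).map incl
  · have reach_parent := (hconn.preconnected root ⟨p b, hparent b hmem⟩).map incl
    have parent_adj : ((attachLeaves T p).induce S).Adj (incl ⟨p b, hparent b hmem⟩)
        ⟨.inr b, hmem⟩ := (attachLeaves_adj_inl_inr (T := T)).2 rfl
    exact reach_parent.trans parent_adj.reachable

theorem attachLeaves_connected (hT : T.Connected) : (attachLeaves T p).Connected :=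
  (induceUnivIso _).connected_iff.1 <|
    attachLeaves_induce_connected ((induceUnivIso T).connected_iff.2 hT) fun _ _ => trivial

theorem attachLeaves_isBridge_leaf (b : β) :
    (attachLeaves T p).IsBridge s(.inl (p b), .inr b) := by
  refine isBridge_iff.2 (not_reachable_of_neighborSet_right_eq_empty Sum.inl_ne_inr ?_)
  ext (a | b') <;> simp

/- The retraction of the new graph onto `T` sending each leaf to its parent collapses the leaf
edges, so it turns a walk avoiding an edge of `T` into a walk of `T` avoiding that edge. -/
theorem attachLeaves_isBridge_inl {a a' : α} (h : T.IsBridge s(a, a')) :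
    (attachLeaves T p).IsBridge s(.inl a, .inl a') := by
  rw [isBridge_iff, reachable_iff_reflTransGen] at h ⊢
  refine fun hwalk => h (Relation.ReflTransGen.lift' (Sum.elim id p) ?_ _ _ hwalk)
  rintro (x | b) (y | b') hxy
  · refine .single ?_
    simpa using hxy
  · obtain rfl := attachLeaves_adj_inl_inr.1 (deleteEdges_le _ hxy)
    exact .refl
  · obtain rfl := attachLeaves_adj_inr_inl.1 (deleteEdges_le _ hxy)
    exact .refl
  · exact (not_attachLeaves_adj_inr_inr (deleteEdges_le _ hxy)).elim

theorem attachLeaves_isAcyclic (hT : T.IsAcyclic) : (attachLeaves T p).IsAcyclic := by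
  rw [isAcyclic_iff_forall_adj_isBridge] at hT ⊢
  rintro (a | b) (a' | b') hadj
  · exact attachLeaves_isBridge_inl (hT hadj)
  · obtain rfl := attachLeaves_adj_inl_inr.1 hadj
    exact attachLeaves_isBridge_leaf b'
  · obtain rfl := attachLeaves_adj_inr_inl.1 hadj
    rw [Sym2.eq_swap]
    exact attachLeaves_isBridge_leaf b
  · exact (not_attachLeaves_adj_inr_inr hadj).elim

theorem attachLeaves_isTree (hT : T.IsTree) : (attachLeaves T p).IsTree :=
  ⟨attachLeaves_connected hT.connected, attachLeaves_isAcyclic hT.isAcyclic⟩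

end attachLeaves

theorem induce_union_iUnion_connected {α : Type*} {ι : Sort*} {H : SimpleGraph α} {A : Set α}
    {B : ι → Set α} (hA : (H.induce A).Connected) (hB : ∀ i, (H.induce (B i)).Connected)
    (hAB : ∀ i, (A ∩ B i).Nonempty) : (H.induce (A ∪ ⋃ i, B i)).Connected := by
  obtain ⟨r, hr⟩ := hA.nonempty
  refine induce_connected_of_patches r (.inl hr) fun {x} hx => ?_
  rcases hx with hx | hx
  · exact ⟨A, Set.subset_union_left, hr, hx, hA.preconnected _ _⟩
  · obtain ⟨i, hx⟩ := Set.mem_iUnion.1 hx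
    exact ⟨A ∪ B i, Set.union_subset_union_right A (Set.subset_iUnion B i), .inl hr, .inr hx,
      (induce_union_connected hA.preconnected (hB i).preconnected (hAB i)).preconnected _ _⟩

theorem self_mem_closedNbhd {V : Type} (G : SimpleGraph V) (v : V) : v ∈ closedNbhd G v :=
  Set.mem_insert v _

theorem mem_closedNbhd_of_adj {V : Type} {G : SimpleGraph V} {u v : V} (h : G.Adj u v) :
    v ∈ closedNbhd G u :=
  Set.mem_insert_of_mem u h

namespace TreeDecomp

variable {V : Type} {G : SimpleGraph V} (td : TreeDecomp G) {L : Set V} {v : V}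

/-- The bag `(β(x) \ L) ∪ N(β(x) ∩ L)`, in which the vertices of `L` in `β(x)` are exchanged for
their neighbours. -/
def exchangeBag (L : Set V) (x : td.ι) : Set V :=
  (td.bag x \ L) ∪ extNbhd G (td.bag x ∩ L)

theorem disjoint_exchangeBag (hL : G.IsIndepSet L) (x : td.ι) :
    Disjoint L (td.exchangeBag L x) := by
  refine Set.disjoint_left.2 fun v hv hmem => ?_
  rcases hmem with ⟨_, hv'⟩ | ⟨hnbhd, hv'⟩
  · exact hv' hv
  · obtain ⟨s, hs, rfl | hadj⟩ := Set.mem_iUnion₂.1 hnbhd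
    · exact hv' hs
    · exact hL hs.2 hv hadj.ne hadj

theorem mem_exchangeBag (hv : v ∉ L) {x : td.ι} :
    v ∈ td.exchangeBag L x ↔ v ∈ td.bag x ∨ ∃ s ∈ L, G.Adj s v ∧ s ∈ td.bag x := by
  constructor
  · rintro (⟨hx, _⟩ | ⟨hnbhd, hv'⟩)
    · exact .inl hx
    · obtain ⟨s, hs, rfl | hadj⟩ := Set.mem_iUnion₂.1 hnbhd
      · exact (hv' hs).elim
      · exact .inr ⟨s, hs.2, hadj, hs.1⟩
  · rintro (hx | ⟨s, hs, hadj, hx⟩)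
    · exact .inl ⟨hx, hv⟩
    · exact .inr ⟨Set.mem_biUnion ⟨hx, hs⟩ (mem_closedNbhd_of_adj hadj), fun h => hv h.2⟩

theorem connected_induce_mem_exchangeBag (hv : v ∉ L) :
    (td.T.induce {x | v ∈ td.exchangeBag L x}).Connected := by
  have nodes_eq : {x | v ∈ td.exchangeBag L x} =
      {x | v ∈ td.bag x} ∪ ⋃ s : {s // s ∈ L ∧ G.Adj s v}, {x | s.1 ∈ td.bag x} := by
    ext x
    simp [td.mem_exchangeBag hv, and_assoc]
  rw [nodes_eq]
  refine induce_union_iUnion_connected (td.bag_conn v) (fun s => td.bag_conn s) fun s => ?_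
  obtain ⟨x, hs, hvx⟩ := td.edge_bag s.2.2
  exact ⟨x, hvx, hs⟩

/-- The bags of `exchange`: the exchanged bags at the old nodes, and `N[s]` at the leaf of
`s ∈ L`. -/
def exchangeBags (L : Set V) : td.ι ⊕ L → Set V :=
  Sum.elim (td.exchangeBag L) fun s => closedNbhd G s

theorem setOf_mem_exchangeBags_of_mem (hL : G.IsIndepSet L) (hv : v ∈ L) :
    {z | v ∈ td.exchangeBags L z} = {.inr ⟨v, hv⟩} := by
  refine Set.eq_singleton_iff_unique_mem.2 ⟨self_mem_closedNbhd G v, ?_⟩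
  rintro (x | s) hz
  · exact (Set.disjoint_left.1 (td.disjoint_exchangeBag hL x) hv hz).elim
  · rcases hz with rfl | hadj
    · rfl
    · exact (hL s.2 hv hadj.ne hadj).elim

theorem connected_induce_mem_exchangeBags (hL : G.IsIndepSet L) {p : L → td.ι}
    (hp : ∀ s : L, s.1 ∈ td.bag (p s)) (v : V) :
    ((attachLeaves td.T p).induce {z | v ∈ td.exchangeBags L z}).Connected := by
  by_cases hv : v ∈ L
  · rw [td.setOf_mem_exchangeBags_of_mem hL hv]
    exact .of_subsingleton
  · refine attachLeaves_induce_connected (td.connected_induce_mem_exchangeBag hv) fun s hs => ?_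
    rcases hs with rfl | hadj
    · exact (hv s.2).elim
    · exact (td.mem_exchangeBag hv).2 (.inr ⟨s, s.2, hadj, hp s⟩)

theorem exists_mem_exchangeBags (L : Set V) (v : V) : ∃ z, v ∈ td.exchangeBags L z := by
  by_cases hv : v ∈ L
  · exact ⟨.inr ⟨v, hv⟩, self_mem_closedNbhd G v⟩
  · obtain ⟨x, hx⟩ := td.mem_bag v
    exact ⟨.inl x, .inl ⟨hx, hv⟩⟩

theorem exists_mem_exchangeBags_of_adj (L : Set V) {u v : V} (h : G.Adj u v) :
    ∃ z, u ∈ td.exchangeBags L z ∧ v ∈ td.exchangeBags L z := by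
  by_cases hu : u ∈ L
  · exact ⟨.inr ⟨u, hu⟩, self_mem_closedNbhd G u, mem_closedNbhd_of_adj h⟩
  by_cases hv : v ∈ L
  · exact ⟨.inr ⟨v, hv⟩, mem_closedNbhd_of_adj h.symm, self_mem_closedNbhd G v⟩
  obtain ⟨x, hux, hvx⟩ := td.edge_bag h
  exact ⟨.inl x, .inl ⟨hux, hu⟩, .inl ⟨hvx, hv⟩⟩

/-- The tree decomposition obtained from `td` by exchanging the vertices of the independent set `L`
for their neighbours in every bag, and attaching to the node `p s`, for each `s ∈ L`, a leaf with
bag `N[s]`. -/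
noncomputable def exchange [Finite L] (hL : G.IsIndepSet L) (p : L → td.ι)
    (hp : ∀ s : L, s.1 ∈ td.bag (p s)) : TreeDecomp G where
  ι := td.ι ⊕ L
  fintype_ι := have := td.fintype_ι; Fintype.ofFinite _
  T := attachLeaves td.T p
  isTree := attachLeaves_isTree td.isTree
  bag := td.exchangeBags L
  mem_bag := td.exists_mem_exchangeBags L
  edge_bag _ _ := td.exists_mem_exchangeBags_of_adj L
  bag_conn := td.connected_induce_mem_exchangeBags hL hp

end TreeDecomp

theorem stmt9_general (V : Type) (G : SimpleGraph V) (td : TreeDecomp G) (L : Set V)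
    (hfin : L.Finite) (hL : L.Pairwise fun u v => ¬ G.Adj u v) :
    ∃ td' : TreeDecomp G, ∀ y : td'.ι,
      (∃ s ∈ L, td'.bag y = closedNbhd G s) ∨
      (∃ x : td.ι, td'.bag y = (td.bag x \ L) ∪ extNbhd G (td.bag x ∩ L)) := by
  have := hfin.to_subtype
  choose p hp using fun s : L => td.mem_bag s
  refine ⟨td.exchange hL p hp, ?_⟩
  rintro (x | s)
  · exact .inr ⟨x, rfl⟩
  · exact .inl ⟨s, s.2, rfl⟩

/-- Given a tree decomposition `(T, β)` of a finite graph `G` and an independent set `L`,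
`G` admits a tree decomposition in which every bag is either `N[s]` for some `s ∈ L`, or
`(β(x) \ L) ∪ N(β(x) ∩ L)` for some node `x` of `T`. -/
theorem stmt9 (V : Type) [Fintype V] (G : SimpleGraph V) (td : TreeDecomp G)
    (L : Set V) (hL : L.Pairwise fun u v => ¬ G.Adj u v) :
    ∃ td' : TreeDecomp G, ∀ y : td'.ι,
      (∃ s ∈ L, td'.bag y = closedNbhd G s) ∨
      (∃ x : td.ι, td'.bag y = (td.bag x \ L) ∪ extNbhd G (td.bag x ∩ L)) := by
  exact stmt9_general V G td L L.toFinite hL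
end
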